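/- For every θ ∈ Ξ, θ belongs to Θ_per ∪ Θ_dya if and only if θ = 1/2 or θ is a one-sided isolated point of Ξ, i.e. there exists δ > 0 such that (θ, θ + δ) ∩ Ξ = ∅ or (θ − δ, θ) ∩ Ξ = ∅. (Equivalently: the set ∂(Ξ) consisting of the endpoints of the connected components of (0, 1/2) ∖ Ξ together with the point 1/2 equals (Ξ ∩ Θ_per) ∪ (Ξ ∩ Θ_dya).) -/

import Mathlib

/-- The set `Ξ` of Head's angles: angles `θ ∈ (0, 1/2]` with `2^k θ ∈ [θ, 1] (mod ℤ)`
for all `k ≥ 0`. -/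
def HeadXi : Set ℝ :=
  {θ : ℝ | 0 < θ ∧ θ ≤ 1/2 ∧ ∀ k : ℕ, ∃ n : ℤ, θ ≤ 2 ^ k * θ - n ∧ 2 ^ k * θ - n ≤ 1}

/-- The angles in `(0, 1/2]` periodic under the doubling map. -/
def ThetaPer : Set ℝ :=
  {t : ℝ | 0 < t ∧ t ≤ 1/2 ∧ ∃ k : ℕ, 1 ≤ k ∧ ∃ n : ℤ, 2 ^ k * t - t = n}

/-- The dyadic angles in `(0, 1/2]` (eventually mapped to `0 ≡ 1` by doubling). -/
def ThetaDya : Set ℝ :=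
  {t : ℝ | 0 < t ∧ t ≤ 1/2 ∧ ∃ k : ℕ, 1 ≤ k ∧ ∃ n : ℤ, 2 ^ k * t = n}

/-! Let `b = 2`. A point `θ ∈ (0, 1/2]` lies in `Ξ` iff no `b ^ k * θ` lies strictly between an
integer `m` and `m + θ`. If `b ^ k * θ` is an integer `n`, then for `t` slightly larger than `θ` the
number `b ^ k * t` lies just above `n`, so `t ∉ Ξ`. If `b ^ k * θ = θ + n` with `k ≥ 1`, then for
`t` slightly smaller than `θ` the number `b ^ k * t` lies just below `n + t`, since the distance to
`θ` has been expanded, so again `t ∉ Ξ`.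

Conversely, rounding keeps points in `Ξ`: for `θ ∈ Ξ`, the upper dyadic approximations
`⌈θ * b ^ k⌉ / b ^ k` with `k ≥ 1` are in `Ξ`, and so is the largest of the first `K` lower periodic
approximations `⌊θ * (b ^ k - 1)⌋ / (b ^ k - 1)`, if it is positive. Both converge to `θ`, so `θ` is
a limit of `Ξ` from above unless it is dyadic, and from below unless it is periodic. -/

open Filter Topology

theorem exists_int_sub_mem_Icc_one_iff {R : Type*} [Ring R] [LinearOrder R] [IsStrictOrderedRing R]
    [FloorRing R] {a x : R} :
    (∃ n : ℤ, a ≤ x - n ∧ x - n ≤ 1) ↔ ∀ m : ℤ, (m : R) < x → m + a ≤ x := by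
  constructor
  · rintro ⟨n, hax, hx⟩ m hm
    have hmn : m < n + 1 := by
      exact_mod_cast hm.trans_le (sub_le_iff_le_add'.mp hx)
    have hmn' : (m : R) ≤ n := Int.cast_le.mpr (Int.lt_add_one_iff.mp hmn)
    calc (m : R) + a ≤ n + a := by gcongr
      _ ≤ x := le_sub_iff_add_le'.mp hax
  · intro h
    have hlt : ((⌈x⌉ - 1 : ℤ) : R) < x := Int.lt_ceil.mp (sub_one_lt _)
    refine ⟨⌈x⌉ - 1, le_sub_iff_add_le'.mpr (h _ hlt), ?_⟩
    simpa using Int.le_ceil x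

section Rounding

variable {K : Type*} [Field K] [LinearOrder K] [IsStrictOrderedRing K] [FloorRing K]
  [TopologicalSpace K] [OrderTopology K]

theorem tendsto_int_floor_mul_div_atTop (a : K) :
    Tendsto (fun x : K ↦ (⌊a * x⌋ : K) / x) atTop (𝓝 a) := by
  have hlower : Tendsto (fun x : K ↦ a - x⁻¹) atTop (𝓝 a) := by
    simpa using tendsto_const_nhds.sub (tendsto_inv_atTop_zero (𝕜 := K))
  refine tendsto_of_tendsto_of_tendsto_of_le_of_le' hlower tendsto_const_nhds ?_ ?_
  · filter_upwards [eventually_gt_atTop 0] with x hx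
    rw [le_div_iff₀ hx, sub_mul, inv_mul_cancel₀ hx.ne']
    exact (Int.sub_one_lt_floor _).le
  · filter_upwards [eventually_gt_atTop 0] with x hx
    exact (div_le_iff₀ hx).mpr (Int.floor_le _)

theorem tendsto_int_ceil_mul_div_atTop (a : K) :
    Tendsto (fun x : K ↦ (⌈a * x⌉ : K) / x) atTop (𝓝 a) := by
  simpa [neg_mul, Int.floor_neg, neg_div] using (tendsto_int_floor_mul_div_atTop (-a)).neg

end Rounding

/-- The upper `b`-adic approximation of level `k`, for `b ≥ 1`: the least fraction with denominator
`b ^ k` that is at least `θ`. -/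
noncomputable def upperAdic (b k : ℕ) (θ : ℝ) : ℝ := ⌈θ * b ^ k⌉ / b ^ k

/-- The lower periodic approximation of level `k`, for `b ≥ 2` and `k ≥ 1`: the greatest point that
is at most `θ` and is fixed modulo `ℤ` by multiplication by `b ^ k`. If `b ^ k = 1`, it has the junk
value `0`. -/
noncomputable def lowerPeriodic (b k : ℕ) (θ : ℝ) : ℝ := ⌊θ * (b ^ k - 1)⌋ / (b ^ k - 1)

/-- For `θ ∈ (0, 1]`: `θ` is the least point of its own orbit under multiplication by `b` on the
circle `ℝ / ℤ`, whose points are represented in `(0, 1]`. To avoid choosing representatives, this is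
expressed by saying that no `b ^ k * θ` lies strictly between an integer `m` and `m + θ`, which
holds automatically for `θ ≤ 0`. -/
def IsLeastInOrbit (b : ℕ) (θ : ℝ) : Prop :=
  ∀ (k : ℕ) (m : ℤ), (m : ℝ) < b ^ k * θ → m + θ ≤ b ^ k * θ

section Approximation

variable {b k : ℕ} {θ : ℝ}

theorem pow_mul_upperAdic (hb : 0 < b) : (b : ℝ) ^ k * upperAdic b k θ = ⌈θ * b ^ k⌉ :=
  mul_div_cancel₀ _ (by positivity)

theorem le_upperAdic (hb : 0 < b) : θ ≤ upperAdic b k θ :=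
  (le_div_iff₀ (by positivity)).mpr (Int.le_ceil _)

theorem upperAdic_le_iff {c : ℝ} {n : ℤ} (hb : 0 < b) (hn : b ^ k * c = n) :
    upperAdic b k θ ≤ c ↔ θ ≤ c := by
  have hbk : (0 : ℝ) < b ^ k := by positivity
  rw [upperAdic, div_le_iff₀' hbk, hn, Int.cast_le, Int.ceil_le, ← hn, mul_comm,
    mul_le_mul_iff_right₀ hbk]

theorem tendsto_upperAdic (hb : 1 < b) (θ : ℝ) :
    Tendsto (fun k ↦ upperAdic b k θ) atTop (𝓝 θ) :=
  (tendsto_int_ceil_mul_div_atTop θ).comp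
    (tendsto_pow_atTop_atTop_of_one_lt (Nat.one_lt_cast.mpr hb))

theorem pow_sub_one_pos (hb : 1 < b) (hk : k ≠ 0) : (0 : ℝ) < b ^ k - 1 :=
  sub_pos.mpr (one_lt_pow₀ (Nat.one_lt_cast.mpr hb) hk)

theorem pow_mul_lowerPeriodic (hb : 1 < b) (hk : k ≠ 0) :
    (b : ℝ) ^ k * lowerPeriodic b k θ = lowerPeriodic b k θ + ⌊θ * (b ^ k - 1)⌋ := by
  have hfix : lowerPeriodic b k θ * (b ^ k - 1) = ⌊θ * (b ^ k - 1)⌋ :=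
    div_mul_cancel₀ _ (pow_sub_one_pos hb hk).ne'
  linear_combination hfix

theorem lowerPeriodic_le (hb : 1 < b) (hk : k ≠ 0) : lowerPeriodic b k θ ≤ θ :=
  (div_le_iff₀ (pow_sub_one_pos hb hk)).mpr (Int.floor_le _)

theorem div_le_lowerPeriodic {m : ℤ} (hb : 1 < b) (hk : k ≠ 0) (hm : m + θ ≤ b ^ k * θ) :
    m / (b ^ k - 1) ≤ lowerPeriodic b k θ :=
  div_le_div_of_nonneg_right
    (Int.cast_le.mpr (Int.le_floor.mpr (by linarith))) (pow_sub_one_pos hb hk).le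

theorem tendsto_lowerPeriodic (hb : 1 < b) (θ : ℝ) :
    Tendsto (fun k ↦ lowerPeriodic b k θ) atTop (𝓝 θ) :=
  (tendsto_int_floor_mul_div_atTop θ).comp <| tendsto_atTop_add_const_right _ (-1)
    (tendsto_pow_atTop_atTop_of_one_lt (Nat.one_lt_cast.mpr hb))

end Approximation

namespace IsLeastInOrbit

variable {b : ℕ} {θ : ℝ}

theorem le_one (h : IsLeastInOrbit b θ) : θ ≤ 1 := by
  by_contra! hθ
  have hone : ((1 : ℤ) : ℝ) + θ ≤ (b : ℝ) ^ 0 * θ := h 0 1 (by simpa using hθ)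
  simp only [Int.cast_one, pow_zero, one_mul] at hone
  linarith

protected theorem upperAdic (hb : 0 < b) (h : IsLeastInOrbit b θ) (M : ℕ) :
    IsLeastInOrbit b (upperAdic b M θ) := by
  intro k m hm
  set t := upperAdic b M θ
  have ht : (b : ℝ) ^ M * t = ⌈θ * b ^ M⌉ := pow_mul_upperAdic hb
  rcases le_total M k with hMk | hkM
  · obtain ⟨d, rfl⟩ := Nat.exists_eq_add_of_le hMk
    have hint : (b : ℝ) ^ (M + d) * t = (b ^ d * ⌈θ * b ^ M⌉ : ℤ) := by
      push_cast
      linear_combination (b : ℝ) ^ d * ht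
    have hle_one : t ≤ 1 := (upperAdic_le_iff (n := b ^ M) hb (by simp)).mpr h.le_one
    rw [hint, Int.cast_lt, ← Int.add_one_le_iff] at hm
    calc (m : ℝ) + t ≤ (m + 1 : ℤ) := by push_cast; gcongr
      _ ≤ _ := hint ▸ Int.cast_le.mpr hm
  · obtain ⟨d, rfl⟩ := Nat.exists_eq_add_of_le hkM
    have hbk : (0 : ℝ) < b ^ k := by positivity
    have hmθ : (m : ℝ) / b ^ k < θ := by
      have hdiv : (b : ℝ) ^ (k + d) * (m / b ^ k) = (m * b ^ d : ℤ) := by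
        push_cast
        field_simp
        ring
      rw [← not_le, ← upperAdic_le_iff hb hdiv, not_le]
      exact (div_lt_iff₀' hbk).mpr hm
    have hθ : θ ≤ b ^ k * t - m := by
      have hround : (b : ℝ) ^ k * θ ≤ b ^ k * t := by gcongr; exact le_upperAdic hb
      linarith [h k m ((div_lt_iff₀' hbk).mp hmθ)]
    have hadic : (b : ℝ) ^ (k + d) * (b ^ k * t - m) =
        (b ^ k * ⌈θ * b ^ (k + d)⌉ - b ^ (k + d) * m : ℤ) := by
      push_cast
      linear_combination (b : ℝ) ^ k * ht
    linarith [(upperAdic_le_iff hb hadic).mpr hθ]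

theorem of_pow_mul_eq_add {N : ℕ} {c : ℤ} (hN : N ≠ 0) (hper : b ^ N * θ = θ + c)
    (h : ∀ k < N, ∀ m : ℤ, (m : ℝ) < b ^ k * θ → m + θ ≤ b ^ k * θ) : IsLeastInOrbit b θ := by
  intro k
  induction k using Nat.strong_induction_on with
  | _ k ih =>
    rcases lt_or_ge k N with hk | hk
    · exact h k hk
    · obtain ⟨d, rfl⟩ := Nat.exists_eq_add_of_le hk
      have hshift : (b : ℝ) ^ (N + d) * θ = b ^ d * θ + (b ^ d * c : ℤ) := by
        push_cast
        linear_combination (b : ℝ) ^ d * hper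
      intro m hm
      have hd := ih d (by omega) (m - b ^ d * c)
      rw [hshift] at hm ⊢
      rw [Int.cast_sub] at hd
      linarith [hd (by linarith)]

protected theorem lowerPeriodic {K N : ℕ} (hb : 1 < b) (h : IsLeastInOrbit b θ)
    (hN : N ∈ Finset.Icc 1 K)
    (hmax : ∀ k ∈ Finset.Icc 1 K, lowerPeriodic b k θ ≤ lowerPeriodic b N θ) :
    IsLeastInOrbit b (lowerPeriodic b N θ) := by
  rw [Finset.mem_Icc] at hN
  have hN0 : N ≠ 0 := by omega
  have hle : lowerPeriodic b N θ ≤ θ := lowerPeriodic_le hb hN0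
  refine of_pow_mul_eq_add hN0 (pow_mul_lowerPeriodic hb hN0) fun k hk m hm ↦ ?_
  have hm_le : (m : ℝ) + θ ≤ b ^ k * θ := h k m (hm.trans_le (by gcongr))
  rcases eq_or_ne k 0 with rfl | hk0
  · linarith
  · have hbk := pow_sub_one_pos hb hk0
    have hdiv : (m : ℝ) / (b ^ k - 1) ≤ lowerPeriodic b N θ :=
      (div_le_lowerPeriodic hb hk0 hm_le).trans (hmax k (Finset.mem_Icc.mpr (by omega)))
    rw [div_le_iff₀ hbk] at hdiv
    linarith

end IsLeastInOrbit

theorem not_isLeastInOrbit_of_pow_mul_eq {b k : ℕ} {n : ℤ} {θ t : ℝ} (hb : 0 < b)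
    (hθ : b ^ k * θ = n) (ht : t ∈ Set.Ioo θ (θ + θ / b ^ k)) : ¬ IsLeastInOrbit b t := by
  intro h
  have hbk : (0 : ℝ) < b ^ k := by positivity
  have hlt : (n : ℝ) < b ^ k * t := hθ ▸ mul_lt_mul_of_pos_left ht.1 hbk
  have hclose : (t - θ) * b ^ k < θ := (lt_div_iff₀ hbk).mp (by linarith [ht.2])
  linarith [h k n hlt, ht.1]

theorem not_isLeastInOrbit_of_pow_mul_sub_eq {b k : ℕ} {n : ℤ} {θ t : ℝ} (hb : 1 < b) (hk : k ≠ 0)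
    (hθ : b ^ k * θ - θ = n) (ht : t ∈ Set.Ioo (θ - θ / b ^ k) θ) : ¬ IsLeastInOrbit b t := by
  intro h
  have hclose : (θ - t) * b ^ k < θ := (lt_div_iff₀ (by positivity)).mp (by linarith [ht.1])
  have hexpand : (b ^ k - 1) * t < (b ^ k - 1) * θ :=
    mul_lt_mul_of_pos_left ht.2 (pow_sub_one_pos hb hk)
  linarith [h k n (by linarith)]

theorem mem_headXi_iff {θ : ℝ} : θ ∈ HeadXi ↔ 0 < θ ∧ θ ≤ 1 / 2 ∧ IsLeastInOrbit 2 θ := by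
  simp only [HeadXi, Set.mem_ofPred_eq, exists_int_sub_mem_Icc_one_iff, IsLeastInOrbit,
    Nat.cast_ofNat]

theorem exists_mem_headXi_inter_thetaDya {θ c : ℝ} (hθ : θ ∈ HeadXi) (hc : θ < c) :
    ∃ t ∈ HeadXi ∩ ThetaDya, θ ≤ t ∧ t < c := by
  obtain ⟨hpos, hhalf, hleast⟩ := mem_headXi_iff.mp hθ
  obtain ⟨k, hkc, hk⟩ := (((tendsto_upperAdic one_lt_two θ).eventually_lt_const hc).and
    (eventually_ge_atTop 1)).exists
  have hle : θ ≤ upperAdic 2 k θ := le_upperAdic two_pos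
  have hle_half : upperAdic 2 k θ ≤ 1 / 2 := by
    obtain ⟨d, rfl⟩ := Nat.exists_eq_add_of_le hk
    refine (upperAdic_le_iff (n := 2 ^ d) two_pos ?_).mpr hhalf
    push_cast
    ring
  refine ⟨upperAdic 2 k θ, ⟨mem_headXi_iff.mpr ⟨hpos.trans_le hle, hle_half,
    hleast.upperAdic two_pos k⟩, hpos.trans_le hle, hle_half, k, hk, ⌈θ * (2 : ℕ) ^ k⌉, ?_⟩,
    hle, hkc⟩
  exact_mod_cast pow_mul_upperAdic two_pos

theorem exists_mem_headXi_inter_thetaPer {θ c : ℝ} (hθ : θ ∈ HeadXi) (hc : c < θ) :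
    ∃ t ∈ HeadXi ∩ ThetaPer, c < t ∧ t ≤ θ := by
  obtain ⟨hpos, hhalf, hleast⟩ := mem_headXi_iff.mp hθ
  obtain ⟨K, hK, hK1⟩ := (((tendsto_lowerPeriodic one_lt_two θ).eventually_const_lt
    (max_lt hc hpos)).and (eventually_ge_atTop 1)).exists
  have hKmem : K ∈ Finset.Icc 1 K := Finset.mem_Icc.mpr ⟨hK1, le_rfl⟩
  obtain ⟨N, hN, hmax⟩ :=
    Finset.exists_max_image (Finset.Icc 1 K) (fun k ↦ lowerPeriodic 2 k θ) ⟨K, hKmem⟩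
  have hN1 : 1 ≤ N := (Finset.mem_Icc.mp hN).1
  have hle : lowerPeriodic 2 N θ ≤ θ := lowerPeriodic_le one_lt_two (by omega)
  obtain ⟨hct, htpos⟩ := max_lt_iff.mp (hK.trans_le (hmax K hKmem))
  refine ⟨lowerPeriodic 2 N θ, ⟨mem_headXi_iff.mpr ⟨htpos, hle.trans hhalf,
    hleast.lowerPeriodic one_lt_two hN hmax⟩, htpos, hle.trans hhalf, N, hN1,
    ⌊θ * ((2 : ℕ) ^ N - 1)⌋, ?_⟩, hct, hle⟩
  rw [sub_eq_iff_eq_add']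
  exact_mod_cast pow_mul_lowerPeriodic one_lt_two (by omega)

theorem mem_thetaDya_iff_of_mem_headXi {θ : ℝ} (hθ : θ ∈ HeadXi) :
    θ ∈ ThetaDya ↔ ∃ δ > 0, Set.Ioo θ (θ + δ) ∩ HeadXi = ∅ := by
  constructor
  · rintro ⟨hpos, -, k, -, n, hn⟩
    refine ⟨θ / (2 : ℕ) ^ k, by positivity, ?_⟩
    rw [← Set.disjoint_iff_inter_eq_empty, Set.disjoint_left]
    exact fun t ht htXi ↦ not_isLeastInOrbit_of_pow_mul_eq two_pos (by exact_mod_cast hn) ht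
      (mem_headXi_iff.mp htXi).2.2
  · rintro ⟨δ, hδ, hempty⟩
    obtain ⟨t, ⟨htXi, htDya⟩, hle, hlt⟩ :=
      exists_mem_headXi_inter_thetaDya hθ (lt_add_of_pos_right θ hδ)
    rcases hle.eq_or_lt with rfl | hgt
    · exact htDya
    · exact (Set.notMem_empty t (hempty ▸ ⟨⟨hgt, hlt⟩, htXi⟩)).elim

theorem mem_thetaPer_iff_of_mem_headXi {θ : ℝ} (hθ : θ ∈ HeadXi) :
    θ ∈ ThetaPer ↔ ∃ δ > 0, Set.Ioo (θ - δ) θ ∩ HeadXi = ∅ := by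
  constructor
  · rintro ⟨hpos, -, k, hk, n, hn⟩
    refine ⟨θ / (2 : ℕ) ^ k, by positivity, ?_⟩
    rw [← Set.disjoint_iff_inter_eq_empty, Set.disjoint_left]
    exact fun t ht htXi ↦ not_isLeastInOrbit_of_pow_mul_sub_eq one_lt_two (by omega)
      (by exact_mod_cast hn) ht (mem_headXi_iff.mp htXi).2.2
  · rintro ⟨δ, hδ, hempty⟩
    obtain ⟨t, ⟨htXi, htPer⟩, hlt, hle⟩ :=
      exists_mem_headXi_inter_thetaPer hθ (sub_lt_self θ hδ)
    rcases hle.eq_or_lt with rfl | hgt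
    · exact htPer
    · exact (Set.notMem_empty t (hempty ▸ ⟨⟨hlt, hgt⟩, htXi⟩)).elim

theorem half_mem_thetaDya : 1 / 2 ∈ ThetaDya :=
  ⟨by norm_num, le_rfl, 1, le_rfl, 1, by norm_num⟩

/-- For `θ ∈ Ξ`: `θ ∈ Θ_per ∪ Θ_dya` iff `θ = 1/2` or `θ` is a one-sided isolated
point of `Ξ`. -/
theorem headXi_boundary_characterization (θ : ℝ) (hθ : θ ∈ HeadXi) :
    θ ∈ ThetaPer ∪ ThetaDya ↔
      θ = 1/2 ∨ ∃ δ > 0, Set.Ioo θ (θ + δ) ∩ HeadXi = ∅ ∨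
        Set.Ioo (θ - δ) θ ∩ HeadXi = ∅ := by
  rw [Set.mem_union]
  constructor
  · rintro (hper | hdya)
    · obtain ⟨δ, hδ, hempty⟩ := (mem_thetaPer_iff_of_mem_headXi hθ).mp hper
      exact .inr ⟨δ, hδ, .inr hempty⟩
    · obtain ⟨δ, hδ, hempty⟩ := (mem_thetaDya_iff_of_mem_headXi hθ).mp hdya
      exact .inr ⟨δ, hδ, .inl hempty⟩
  · rintro (rfl | ⟨δ, hδ, hright | hleft⟩)
    · exact .inr half_mem_thetaDya
    · exact .inr ((mem_thetaDya_iff_of_mem_headXi hθ).mpr ⟨δ, hδ, hright⟩)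
    · exact .inl ((mem_thetaPer_iff_of_mem_headXi hθ).mpr ⟨δ, hδ, hleft⟩)
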